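/- Let P_b, P_t, and P_t′ be normal programs over a set A of propositional atoms such that (P_b, P_t) is a splitting of P = P_b ∪ P_t and (P_b, P_t′) is a splitting of P′ = P_b ∪ P_t′. Suppose that for every answer set I_b of P_b, the programs P_t ∪ I_b and P_t′ ∪ I_b have the same answer sets. Then P and P′ have the same answer sets. (This is the splitting-based replacement principle that justifies replacing, in the top part of a split program, an aggregate expression built entirely from atoms of the bottom part by any classically equivalent form.) -/

import Mathlib

/-- A rule of a normal logic program: a head (`none` represents `⊥`, i.e. a
constraint), a finite set of positive body atoms and a finite set of negated
body atoms.  The type `α` is the set of propositional atoms. -/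
structure NRule (α : Type*) where
  head : Option α
  pos : Finset α
  neg : Finset α

namespace NRule

/-- The atoms occurring (in the head or in the body) of a rule. -/
def atoms {α : Type*} (r : NRule α) : Set α :=
  {a | r.head = some a} ∪ ↑r.pos ∪ ↑r.neg

end NRule

/-- A normal program is a set of rules. -/
abbrev NProgram (α : Type*) := Set (NRule α)

/-- A rule survives into (and is kept, with its negative body removed, in) the
reduct `P^I` iff its negated body is disjoint from `I`. -/
def InReduct {α : Type*} (I : Set α) (r : NRule α) : Prop :=
  ∀ a ∈ r.neg, a ∉ I

/-- `J` is closed under the (positive parts of the) atom-headed rules of the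
reduct `P^I`: whenever such a rule has its positive body inside `J`, its head
atom is in `J`. -/
def ClosedUnder {α : Type*} (P : NProgram α) (I J : Set α) : Prop :=
  ∀ r ∈ P, InReduct I r → ∀ a : α, r.head = some a → ↑r.pos ⊆ J → a ∈ J

/-- `I` is an answer set of `P`: (i) `I` is the least set closed under the
atom-headed rules of the reduct `P^I`, and (ii) no `⊥`-headed rule of the
reduct `P^I` has its positive body inside `I`. -/
def IsAnswerSet {α : Type*} (P : NProgram α) (I : Set α) : Prop :=
  (ClosedUnder P I I ∧ ∀ J : Set α, ClosedUnder P I J → I ⊆ J) ∧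
    ¬ ∃ r ∈ P, InReduct I r ∧ r.head = none ∧ ↑r.pos ⊆ I

/-- A set `S` of atoms identified with the set of facts `{a ← . : a ∈ S}`. -/
def facts {α : Type*} (S : Set α) : NProgram α :=
  {r | ∃ a ∈ S, r = ⟨some a, ∅, ∅⟩}

/-- `(Pb, Pt)` is a splitting (of `Pb ∪ Pt`): no atom occurring in `Pb` is the
head of a rule of `Pt`. -/
def IsSplitting {α : Type*} (Pb Pt : NProgram α) : Prop :=
  ∀ a : α, (∃ r ∈ Pb, a ∈ r.atoms) → ¬ ∃ r ∈ Pt, r.head = some a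

/-!
Let `U` contain the atoms of `Pb` and no head of `Pt`. The rules of `Pb` see only the part of an
interpretation inside `U`, and the rules of `Pt` can derive only atoms outside `U`; hence `I` is an
answer set of `Pb ∪ Pt` iff `I ∩ U` is an answer set of `Pb` and `I` is an answer set of
`Pt ∪ facts (I ∩ U)`. For `U` the set of atoms of `Pb`, the first condition does not mention the
top program, and under it the second one is invariant under the replacement.
-/

namespace NRule

variable {α : Type*} {r : NRule α}

theorem mem_atoms_of_head_eq {a : α} (ha : r.head = some a) : a ∈ r.atoms :=
  .inl (.inl ha)

theorem pos_subset_atoms : ↑r.pos ⊆ r.atoms :=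
  fun _ ha => .inl (.inr ha)

theorem neg_subset_atoms : ↑r.neg ⊆ r.atoms :=
  fun _ ha => .inr ha

end NRule

namespace NProgram

variable {α : Type*}

/-- The atoms occurring (in the head or in the body) of some rule of a program. -/
def atoms (P : NProgram α) : Set α :=
  {a | ∃ r ∈ P, a ∈ r.atoms}

/-- The atoms that are the head of some rule of a program; `⊥` is not one of them. -/
def heads (P : NProgram α) : Set α :=
  {a | ∃ r ∈ P, r.head = some a}

/-- Condition (ii) of the definition of an answer set fails: some constraint of the reduct `P^I`
has its positive body inside `I`. -/
def ViolatesConstraint (P : NProgram α) (I : Set α) : Prop :=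
  ∃ r ∈ P, InReduct I r ∧ r.head = none ∧ ↑r.pos ⊆ I

end NProgram

section

open NProgram

variable {α : Type*} {P Q Pb Pt : NProgram α} {I J K M S U : Set α}

theorem NRule.atoms_subset_of_mem {r : NRule α} (hr : r ∈ P) : r.atoms ⊆ P.atoms :=
  fun _ ha => ⟨r, hr, ha⟩

theorem isSplitting_iff_disjoint : IsSplitting Pb Pt ↔ Disjoint Pb.atoms Pt.heads :=
  Set.disjoint_left.symm

theorem isAnswerSet_iff :
    IsAnswerSet P I ↔ IsLeast {J | ClosedUnder P I J} I ∧ ¬ P.ViolatesConstraint I :=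
  Iff.rfl

theorem closedUnder_union :
    ClosedUnder (P ∪ Q) I J ↔ ClosedUnder P I J ∧ ClosedUnder Q I J := by
  simp only [ClosedUnder, Set.mem_union, or_imp, forall_and]

theorem closedUnder_facts : ClosedUnder (facts S) I J ↔ S ⊆ J := by
  constructor
  · exact fun h a ha => h ⟨some a, ∅, ∅⟩ ⟨a, ha, rfl⟩ (by simp [InReduct]) a rfl (by simp)
  · rintro h _ ⟨a, ha, rfl⟩ _ _ ⟨⟩ _
    exact h ha

theorem closedUnder_of_heads_subset (h : P.heads ⊆ J) : ClosedUnder P I J :=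
  fun r hr _ _ ha _ => h ⟨r, hr, ha⟩

theorem ClosedUnder.inter (hJ : ClosedUnder P I J) (hK : ClosedUnder P I K) :
    ClosedUnder P I (J ∩ K) :=
  fun r hr hred a ha hpos =>
    ⟨hJ r hr hred a ha (hpos.trans Set.inter_subset_left),
      hK r hr hred a ha (hpos.trans Set.inter_subset_right)⟩

theorem violatesConstraint_union :
    (P ∪ Q).ViolatesConstraint I ↔ P.ViolatesConstraint I ∨ Q.ViolatesConstraint I := by
  simp only [ViolatesConstraint, Set.mem_union, or_and_right, exists_or]

theorem not_violatesConstraint_facts : ¬ (facts S).ViolatesConstraint I := by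
  rintro ⟨_, ⟨_, _, rfl⟩, _, hhead, _⟩
  cases hhead

theorem inReduct_inter_iff {r : NRule α} (hU : ↑r.neg ⊆ U) :
    InReduct (I ∩ U) r ↔ InReduct I r :=
  forall₂_congr fun _ ha => not_congr (and_iff_left (hU ha))

theorem closedUnder_inter_left_iff (hU : P.atoms ⊆ U) :
    ClosedUnder P (I ∩ U) J ↔ ClosedUnder P I J :=
  forall₂_congr fun _ hr => imp_congr_left <| inReduct_inter_iff <|
    NRule.neg_subset_atoms.trans ((NRule.atoms_subset_of_mem hr).trans hU)

theorem closedUnder_inter_right_iff (hU : P.atoms ⊆ U) :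
    ClosedUnder P I (J ∩ U) ↔ ClosedUnder P I J := by
  refine forall₅_congr fun r hr _ a ha => ?_
  have hrU : r.atoms ⊆ U := (NRule.atoms_subset_of_mem hr).trans hU
  have hposU : ↑r.pos ⊆ U := NRule.pos_subset_atoms.trans hrU
  have haU : a ∈ U := hrU (NRule.mem_atoms_of_head_eq ha)
  rw [Set.subset_inter_iff, and_iff_left hposU, Set.mem_inter_iff, and_iff_left haU]

theorem closedUnder_congr_of_inter_eq (hU : P.atoms ⊆ U) (hJK : J ∩ U = K ∩ U) :
    ClosedUnder P I J ↔ ClosedUnder P I K := by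
  rw [← closedUnder_inter_right_iff hU, hJK, closedUnder_inter_right_iff hU]

theorem violatesConstraint_inter_iff (hU : P.atoms ⊆ U) :
    P.ViolatesConstraint (I ∩ U) ↔ P.ViolatesConstraint I := by
  refine exists_congr fun r => and_congr_right fun hr => ?_
  have hrU : r.atoms ⊆ U := (NRule.atoms_subset_of_mem hr).trans hU
  rw [inReduct_inter_iff (NRule.neg_subset_atoms.trans hrU), Set.subset_inter_iff,
    and_iff_left (NRule.pos_subset_atoms.trans hrU)]

theorem isLeast_closedUnder_bottom (hU : Pb.atoms ⊆ U) (hdisj : Disjoint U Pt.heads)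
    (hM : IsLeast {J | ClosedUnder (Pb ∪ Pt) I J} M) :
    IsLeast {J | ClosedUnder Pb I J} (M ∩ U) := by
  refine ⟨(closedUnder_inter_right_iff hU).2 (closedUnder_union.1 hM.1).1, fun J hJ => ?_⟩
  -- Adding all atoms outside `U` makes `J` closed under `Pt` without affecting `Pb`.
  have hbottom : ClosedUnder Pb I (J ∪ Uᶜ) :=
    (closedUnder_congr_of_inter_eq hU (by simp [Set.union_inter_distrib_right])).2 hJ
  have htop : ClosedUnder Pt I (J ∪ Uᶜ) :=
    closedUnder_of_heads_subset (hdisj.subset_compl_left.trans Set.subset_union_right)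
  have hMJ : M ⊆ J ∪ Uᶜ := hM.2 (closedUnder_union.2 ⟨hbottom, htop⟩)
  exact fun a ha => (hMJ ha.1).resolve_right (not_not_intro ha.2)

theorem isLeast_closedUnder_top (hU : Pb.atoms ⊆ U)
    (hM : IsLeast {J | ClosedUnder (Pb ∪ Pt) I J} M) :
    IsLeast {J | ClosedUnder (Pt ∪ facts (M ∩ U)) I J} M := by
  obtain ⟨hMb, hMt⟩ := closedUnder_union.1 hM.1
  refine ⟨closedUnder_union.2 ⟨hMt, closedUnder_facts.2 Set.inter_subset_left⟩, fun J hJ => ?_⟩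
  obtain ⟨hJt, hJfacts⟩ := closedUnder_union.1 hJ
  have hMUJ : M ∩ U ⊆ J := closedUnder_facts.1 hJfacts
  have hbottom : ClosedUnder Pb I (J ∩ M) := by
    refine (closedUnder_congr_of_inter_eq hU ?_).2 hMb
    rw [Set.inter_assoc, Set.inter_eq_right.2 hMUJ]
  exact (hM.2 (closedUnder_union.2 ⟨hbottom, hJt.inter hMt⟩)).trans Set.inter_subset_left

theorem isLeast_closedUnder_union (hU : Pb.atoms ⊆ U)
    (hb : IsLeast {J | ClosedUnder Pb I J} (M ∩ U))
    (ht : IsLeast {J | ClosedUnder (Pt ∪ facts (M ∩ U)) I J} M) :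
    IsLeast {J | ClosedUnder (Pb ∪ Pt) I J} M := by
  refine ⟨closedUnder_union.2
    ⟨(closedUnder_inter_right_iff hU).1 hb.1, (closedUnder_union.1 ht.1).1⟩, fun J hJ => ?_⟩
  obtain ⟨hJb, hJt⟩ := closedUnder_union.1 hJ
  exact ht.2 (closedUnder_union.2 ⟨hJt, closedUnder_facts.2 (hb.2 hJb)⟩)

theorem isLeast_closedUnder_union_iff (hU : Pb.atoms ⊆ U) (hdisj : Disjoint U Pt.heads) :
    IsLeast {J | ClosedUnder (Pb ∪ Pt) I J} M ↔
      IsLeast {J | ClosedUnder Pb I J} (M ∩ U) ∧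
        IsLeast {J | ClosedUnder (Pt ∪ facts (M ∩ U)) I J} M :=
  ⟨fun hM => ⟨isLeast_closedUnder_bottom hU hdisj hM, isLeast_closedUnder_top hU hM⟩,
    fun ⟨hb, ht⟩ => isLeast_closedUnder_union hU hb ht⟩

theorem isAnswerSet_union_iff (hU : Pb.atoms ⊆ U) (hdisj : Disjoint U Pt.heads) :
    IsAnswerSet (Pb ∪ Pt) I ↔
      IsAnswerSet Pb (I ∩ U) ∧ IsAnswerSet (Pt ∪ facts (I ∩ U)) I := by
  simp only [isAnswerSet_iff, isLeast_closedUnder_union_iff hU hdisj,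
    closedUnder_inter_left_iff hU, violatesConstraint_union, violatesConstraint_inter_iff hU,
    not_violatesConstraint_facts, or_false, not_or]
  exact and_and_and_comm

theorem isAnswerSet_union_iff_of_isSplitting (hsplit : IsSplitting Pb Pt) :
    IsAnswerSet (Pb ∪ Pt) I ↔
      IsAnswerSet Pb (I ∩ Pb.atoms) ∧ IsAnswerSet (Pt ∪ facts (I ∩ Pb.atoms)) I :=
  isAnswerSet_union_iff subset_rfl (isSplitting_iff_disjoint.1 hsplit)

end

/-- splitting-based replacement principle.  Suppose
`(Pb, Pt)` is a splitting of `P = Pb ∪ Pt` and `(Pb, Pt')` is a splitting of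
`P' = Pb ∪ Pt'`.  If for every answer set `Ib` of `Pb` the programs `Pt ∪ Ib`
and `Pt' ∪ Ib` have the same answer sets, then `P` and `P'` have the same
answer sets. -/
theorem splitting_replacement {α : Type*} (Pb Pt Pt' P P' : NProgram α)
    (hP : P = Pb ∪ Pt) (hP' : P' = Pb ∪ Pt')
    (hsplit : IsSplitting Pb Pt) (hsplit' : IsSplitting Pb Pt')
    (htop : ∀ Ib : Set α, IsAnswerSet Pb Ib →
      ∀ J : Set α, IsAnswerSet (Pt ∪ facts Ib) J ↔ IsAnswerSet (Pt' ∪ facts Ib) J) :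
    ∀ I : Set α, IsAnswerSet P I ↔ IsAnswerSet P' I := by
  intro I
  rw [hP, hP', isAnswerSet_union_iff_of_isSplitting hsplit,
    isAnswerSet_union_iff_of_isSplitting hsplit']
  exact and_congr_right fun hbottom => htop _ hbottom I
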